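/- Let c : ℤ^d → ℤ be a sparse configuration that has a non-trivial annihilator (a nonzero polynomial f with fc = 0). Then c is a finite sum of periodic fibers, i.e., c = e_1 + … + e_r where each e_j is a periodic v_j-fiber for some nonzero v_j ∈ ℤ^d. -/

import Mathlib

namespace PaperFormal

/-- View an integer vector inside `ℝ^d`. -/
def intVecR {d : ℕ} (u : Fin d → ℤ) : Fin d → ℝ := fun i => (u i : ℝ)

/-- View an integer vector inside `ℚ^d`. -/
def intVecQ {d : ℕ} (u : Fin d → ℤ) : Fin d → ℚ := fun i => (u i : ℚ)

/-- A (Laurent) polynomial: a finitely supported integer-valued function on `ℤ^d`. -/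
def IsPoly {d : ℕ} (f : (Fin d → ℤ) → ℤ) : Prop := (Function.support f).Finite

/-- The product `(fc)(u) = ∑_v f(v) · c(u − v)` of a polynomial `f` with `c : ℤ^d → ℤ`. -/
noncomputable def polyApply {d : ℕ} (f : (Fin d → ℤ) → ℤ) (c : (Fin d → ℤ) → ℤ) :
    (Fin d → ℤ) → ℤ := fun u => ∑ᶠ v, f v * c (u - v)

/-- The product `(fc)(u) = ∑_v f(v) · c(u − v)` of a polynomial `f` with `c : ℤ^d → ℂ`. -/
noncomputable def polyApplyC {d : ℕ} (f : (Fin d → ℤ) → ℤ) (c : (Fin d → ℤ) → ℂ) :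
    (Fin d → ℤ) → ℂ := fun u => ∑ᶠ v, (f v : ℂ) * c (u - v)

/-- `c` is `v`-periodic: `c(u + v) = c(u)` for all `u`. -/
def Periodic {d : ℕ} (c : (Fin d → ℤ) → ℤ) (v : Fin d → ℤ) : Prop := ∀ u, c (u + v) = c u

/-- `c : ℤ^d → ℂ` is `v`-periodic. -/
def PeriodicC {d : ℕ} (c : (Fin d → ℤ) → ℂ) (v : Fin d → ℤ) : Prop := ∀ u, c (u + v) = c u

/-- `c` is `k`-periodic: it has `k` periods that are linearly independent over `ℚ`. -/
def KPeriodic {d : ℕ} (k : ℕ) (c : (Fin d → ℤ) → ℤ) : Prop :=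
  ∃ v : Fin k → (Fin d → ℤ),
    (LinearIndependent ℚ fun i => intVecQ (v i)) ∧ ∀ i, Periodic c (v i)

/-- `c` is strongly periodic: it is `d`-periodic. -/
def StronglyPeriodic {d : ℕ} (c : (Fin d → ℤ) → ℤ) : Prop := KPeriodic d c

/-- `c : ℤ^d → ℂ` is strongly periodic. -/
def StronglyPeriodicC {d : ℕ} (c : (Fin d → ℤ) → ℂ) : Prop :=
  ∃ v : Fin d → (Fin d → ℤ),
    (LinearIndependent ℚ fun i => intVecQ (v i)) ∧ ∀ i, PeriodicC c (v i)

/-- Two nonzero integer vectors are non-parallel if they are linearly independent over `ℚ`. -/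
def NonParallel {d : ℕ} (v w : Fin d → ℤ) : Prop :=
  LinearIndependent ℚ ![intVecQ v, intVecQ w]

/-- A line polynomial in direction `v`: a polynomial whose support contains at least two points
and is contained in `u + ℚv` for some `u ∈ ℤ^d`. -/
def IsLinePoly {d : ℕ} (f : (Fin d → ℤ) → ℤ) (v : Fin d → ℤ) : Prop :=
  IsPoly f ∧ v ≠ 0 ∧ 2 ≤ (Function.support f).ncard ∧
    ∃ u : Fin d → ℤ, ∀ w ∈ Function.support f, ∃ q : ℚ, intVecQ w = intVecQ u + q • intVecQ v

/-- The difference polynomial `X^v − 1`: value `1` at `v`, value `−1` at `0`, and `0` elsewhere. -/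
def diffPoly {d : ℕ} (v : Fin d → ℤ) : (Fin d → ℤ) → ℤ :=
  fun u => if u = v then 1 else if u = 0 then -1 else 0

/-- `c : ℤ^d → ℂ` is periodic in direction `v`: it is `kv`-periodic for some nonzero integer `k`. -/
def PeriodicInDirC {d : ℕ} (c : (Fin d → ℤ) → ℂ) (v : Fin d → ℤ) : Prop :=
  ∃ k : ℤ, k ≠ 0 ∧ PeriodicC c (k • v)

/-- `c : ℤ^d → ℂ` is `V`-periodic for a linear subspace `V ⊆ ℝ^d`: it is periodic in
direction `v` for every nonzero integer vector `v` lying in `V`. -/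
def VPeriodicC {d : ℕ} (V : Submodule ℝ (Fin d → ℝ)) (c : (Fin d → ℤ) → ℂ) : Prop :=
  ∀ v : Fin d → ℤ, v ≠ 0 → intVecR v ∈ V → PeriodicInDirC c v

/-- The discrete cube `C_m + t`. -/
def cube {d : ℕ} (m : ℕ) (t : Fin d → ℤ) : Set (Fin d → ℤ) :=
  {u | ∀ i, |u i - t i| ≤ (m : ℤ)}

/-- `c : ℤ^d → ℤ` is sparse: for some positive integer `a`,
`|supp(c) ∩ (C_m + t)| ≤ a·m` for all positive `m` and all `t`. -/
def Sparse {d : ℕ} (c : (Fin d → ℤ) → ℤ) : Prop :=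
  ∃ a : ℕ, 0 < a ∧ ∀ m : ℕ, 0 < m → ∀ t : Fin d → ℤ,
    (Function.support c ∩ cube m t).ncard ≤ a * m

/-- A `v`-fiber: a function whose support is contained in `w + ℚv` for some `w ∈ ℤ^d`. -/
def IsFiber {d : ℕ} (e : (Fin d → ℤ) → ℤ) (v : Fin d → ℤ) : Prop :=
  ∃ w : Fin d → ℤ, ∀ x ∈ Function.support e, ∃ q : ℚ, intVecQ x = intVecQ w + q • intVecQ v

/-- `c` is a sum of finitely many periodic `v`-fibers. -/
def FinSumPeriodicFibers {d : ℕ} (v : Fin d → ℤ) (c : (Fin d → ℤ) → ℤ) : Prop :=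
  ∃ (r : ℕ) (e : Fin r → ((Fin d → ℤ) → ℤ)), c = ∑ j, e j ∧
    ∀ j, IsFiber (e j) v ∧ ∃ w : Fin d → ℤ, w ≠ 0 ∧ Periodic (e j) w

end PaperFormal

/-!
For a prime `p` one has `f(X)^p ≡ f(X^p)` modulo `p`. Hence if `f` annihilates the bounded function
`c`, all values of `f(X^p) c` are multiples of `p`; they are bounded independently of `p`, so they
vanish for large `p`. Iterating, `f(X^n)` annihilates `c` for every `n` without small prime factors,
in particular for all `n = 1 + i r` with a suitable `r`. A combination of these annihilators
eliminates all terms of `f` but one and leaves an annihilator `∏ (X^v - 1)` of `c`. As `c` takes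
finitely many values, parallel directions `v` can be merged.

Fix one of the directions, `v`. By induction on the number of factors `(X^v - 1) c` is a sum of
fibers in the other directions, so it vanishes far out along every `v`-line. Thus `c` has a limit
`g` along `v`, which is `v`-periodic and again sparse, hence supported on finitely many cosets of
`ℤv`. Both `g` and the product of the other factors applied to `c` are invariant under `v`, which
forces this product to annihilate `c - g`, and the induction applies to `c - g`.
-/

namespace PaperFormal

open Filter
open scoped AddMonoidAlgebra

section Action

variable {R G : Type*} [CommSemiring R] [AddCommGroup G]

/-- The convolution action of Laurent polynomials on functions on `G`, with `single v 1` (that is,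
`X^v`) acting as the translation `c ↦ c (· - v)`. A Laurent polynomial is encoded as an element of
the group algebra `R[G]`, so that products of polynomials act as compositions. -/
noncomputable def polyAct : R[G] →ₐ[R] Module.End R (G → R) :=
  AddMonoidAlgebra.lift R (Module.End R (G → R)) G
    { toFun v := LinearMap.funLeft R R (· - v.toAdd)
      map_one' := by ext c x; simp [LinearMap.funLeft]
      map_mul' u v := by ext c x; simp [LinearMap.funLeft, sub_sub] }

lemma polyAct_single_apply (v : G) (a : R) (c : G → R) (x : G) :
    polyAct (.single v a) c x = a * c (x - v) := by
  simp [polyAct]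

lemma polyAct_apply (f : R[G]) (c : G → R) (x : G) :
    polyAct f c x = f.coeff.sum fun v a => a * c (x - v) := by
  simp [polyAct, AddMonoidAlgebra.lift_apply, Finsupp.sum]

lemma polyAct_mul_apply (f g : R[G]) (c : G → R) :
    polyAct (f * g) c = polyAct f (polyAct g c) := by
  simp

lemma polyAct_eq_zero_of_dvd {f g : R[G]} {c : G → R} (hfg : f ∣ g) (hf : polyAct f c = 0) :
    polyAct g c = 0 := by
  obtain ⟨q, rfl⟩ := hfg
  rw [mul_comm, polyAct_mul_apply, hf, map_zero]

lemma polyAct_eq_zero_of_single_mul [NoZeroDivisors R] {v : G} {a : R} (ha : a ≠ 0) {f : R[G]}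
    {c : G → R} (h : polyAct (.single v a * f) c = 0) : polyAct f c = 0 := by
  funext x
  have hx := congrFun h (x + v)
  rw [polyAct_mul_apply, polyAct_single_apply, add_sub_cancel_right] at hx
  exact (mul_eq_zero.1 hx).resolve_left ha

lemma finite_range_polyAct {c : G → R} (hc : (Set.range c).Finite) (f : R[G]) :
    (Set.range (polyAct f c)).Finite := by
  induction f using AddMonoidAlgebra.induction_linear with
  | zero => simp
  | add f g hf hg =>
    refine (hf.image2 (· + ·) hg).subset ?_
    rintro _ ⟨x, rfl⟩
    exact ⟨_, ⟨x, rfl⟩, _, ⟨x, rfl⟩, by simp⟩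
  | single v a =>
    refine (hc.image (a * ·)).subset ?_
    rintro _ ⟨x, rfl⟩
    exact ⟨_, ⟨x - v, rfl⟩, (polyAct_single_apply v a c x).symm⟩

end Action

section MonomialSubOne

variable {R G : Type*} [CommRing R] [AddCommGroup G]

variable (R) in
/-- The difference polynomial `X^v - 1`, whose annihilated functions are the `v`-periodic ones. -/
noncomputable def monomialSubOne (v : G) : R[G] := .single v 1 - 1

lemma polyAct_monomialSubOne_apply (v : G) (c : G → R) (x : G) :
    polyAct (monomialSubOne R v) c x = c (x - v) - c x := by
  simp [monomialSubOne, polyAct_single_apply]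

lemma polyAct_monomialSubOne_eq_zero_iff {v : G} {c : G → R} :
    polyAct (monomialSubOne R v) c = 0 ↔ Function.Periodic c v := by
  refine ⟨fun h x => ?_, fun h => funext fun x => ?_⟩
  · have hx := congrFun h (x + v)
    rw [polyAct_monomialSubOne_apply, add_sub_cancel_right] at hx
    exact (sub_eq_zero.1 hx).symm
  · rw [polyAct_monomialSubOne_apply, h.sub_eq, sub_self, Pi.zero_apply]

lemma monomialSubOne_dvd_nsmul (v : G) (n : ℕ) :
    monomialSubOne R v ∣ monomialSubOne R (n • v) := by
  simpa [monomialSubOne, AddMonoidAlgebra.single_pow] using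
    sub_dvd_pow_sub_pow (AddMonoidAlgebra.single v (1 : R)) 1 n

lemma monomialSubOne_neg (v : G) :
    monomialSubOne R (-v) = -.single (-v) 1 * monomialSubOne R v := by
  simp [monomialSubOne, mul_sub, AddMonoidAlgebra.single_mul_single, AddMonoidAlgebra.one_def,
    neg_add_eq_sub]

lemma monomialSubOne_dvd_zsmul (v : G) (k : ℤ) :
    monomialSubOne R v ∣ monomialSubOne R (k • v) := by
  obtain ⟨n, rfl | rfl⟩ := k.eq_nat_or_neg
  · simpa using monomialSubOne_dvd_nsmul v n
  · rw [neg_smul, natCast_zsmul, monomialSubOne_neg]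
    exact (monomialSubOne_dvd_nsmul v n).mul_left _

end MonomialSubOne

section Expand

variable {R G : Type*} [CommSemiring R] [AddCommGroup G]

/-- The substitution `f(X) ↦ f(X^n)` on Laurent polynomials; compare `Polynomial.expand`. -/
noncomputable def expand (n : ℕ) : R[G] →+* R[G] :=
  AddMonoidAlgebra.mapDomainRingHom R (nsmulAddMonoidHom n)

lemma expand_single (n : ℕ) (v : G) (a : R) :
    expand n (.single v a) = .single (n • v) a := by
  simp [expand]

lemma expand_one (f : R[G]) : expand 1 f = f := by
  induction f using AddMonoidAlgebra.induction_linear <;> simp_all [expand_single]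

lemma expand_mul (m n : ℕ) (f : R[G]) : expand (m * n) f = expand m (expand n f) := by
  induction f using AddMonoidAlgebra.induction_linear <;> simp_all [expand_single, mul_smul]

lemma polyAct_expand_apply (n : ℕ) (f : R[G]) (c : G → R) (x : G) :
    polyAct (expand n f) c x = f.coeff.sum fun v a => a * c (x - n • v) := by
  rw [polyAct_apply]
  exact Finsupp.sum_mapDomain_index (by simp) (by simp [add_mul])

lemma sum_mul_expand_one_add_mul (f : R[G]) (P : Polynomial R[G]) (r : ℕ) :
    (P.sum fun i b => b * expand (1 + i * r) f) =
      f.coeff.sum fun v a => .single v a * P.eval (.single (r • v) 1) := by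
  induction f using AddMonoidAlgebra.induction_linear with
  | zero => simp [Polynomial.sum]
  | add f g hf hg =>
    rw [AddMonoidAlgebra.coeff_add, Finsupp.sum_add_index' (by simp) (by simp [add_mul]),
      ← hf, ← hg]
    simp [Polynomial.sum, mul_add, Finset.sum_add_distrib]
  | single v a =>
    rw [AddMonoidAlgebra.coeff_single, Finsupp.sum_single_index (by simp),
      Polynomial.eval_eq_sum, Polynomial.sum, Polynomial.sum, Finset.mul_sum]
    refine Finset.sum_congr rfl fun i _ => ?_
    rw [expand_single, AddMonoidAlgebra.single_pow, mul_left_comm,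
      AddMonoidAlgebra.single_mul_single, add_smul, one_smul, mul_smul, one_pow, mul_one]

lemma natCast_dvd_pow_sub_expand {p : ℕ} (hp : p.Prime) (f : ℤ[G]) :
    (p : ℤ[G]) ∣ f ^ p - expand p f := by
  induction f using AddMonoidAlgebra.induction_linear with
  | zero => simp [hp.ne_zero]
  | add f g hf hg =>
    obtain ⟨r, hr⟩ := exists_add_pow_prime_eq hp f g
    rw [hr, map_add, show f ^ p + g ^ p + p * f * g * r - (expand p f + expand p g) =
      (f ^ p - expand p f) + (g ^ p - expand p g) + p * (f * g * r) by ring]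
    exact ((hf.add hg).add (dvd_mul_right _ _))
  | single v a =>
    have fermat : (p : ℤ) ∣ a ^ p - a := by
      have := Fact.mk hp
      rw [← ZMod.intCast_zmod_eq_zero_iff_dvd]
      simp
    obtain ⟨k, hk⟩ := fermat
    refine ⟨.single (p • v) k, ?_⟩
    rw [AddMonoidAlgebra.single_pow, expand_single, ← AddMonoidAlgebra.single_sub, hk,
      ← nsmul_eq_mul p (AddMonoidAlgebra.single _ k), AddMonoidAlgebra.smul_single, nsmul_eq_mul]

lemma prime_dvd_polyAct_expand {p : ℕ} (hp : p.Prime) {f : ℤ[G]} {c : G → ℤ}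
    (hf : polyAct f c = 0) (x : G) : (p : ℤ) ∣ polyAct (expand p f) c x := by
  obtain ⟨q, hq⟩ := natCast_dvd_pow_sub_expand hp f
  have hpow : polyAct (f ^ p) c = 0 := polyAct_eq_zero_of_dvd (dvd_pow_self f hp.ne_zero) hf
  refine ⟨-polyAct q c x, ?_⟩
  rw [← sub_sub_self (f ^ p) (expand p f), hq, map_sub, LinearMap.sub_apply, hpow,
    ← nsmul_eq_mul, map_nsmul]
  simp

lemma abs_polyAct_expand_le {c : G → ℤ} {B : ℤ} (hB : ∀ x, |c x| ≤ B) (n : ℕ) (f : ℤ[G]) (x : G) :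
    |polyAct (expand n f) c x| ≤ (f.coeff.sum fun _ a => |a|) * B := by
  rw [polyAct_expand_apply, Finsupp.sum, Finsupp.sum, Finset.sum_mul]
  refine (Finset.abs_sum_le_sum_abs _ _).trans (Finset.sum_le_sum fun v _ => ?_)
  rw [abs_mul]
  exact mul_le_mul_of_nonneg_left (hB _) (abs_nonneg _)

lemma polyAct_expand_eq_zero {c : G → ℤ} {B : ℤ} (hB : ∀ x, |c x| ≤ B) {f : ℤ[G]}
    (hf : polyAct f c = 0) {n : ℕ} (hn0 : n ≠ 0)
    (hn : ∀ p : ℕ, p.Prime → p ∣ n → (f.coeff.sum fun _ a => |a|) * B < p) :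
    polyAct (expand n f) c = 0 := by
  induction n using induction_on_primes with
  | zero => exact absurd rfl hn0
  | one => rwa [expand_one]
  | prime_mul p n hp ih =>
    have hfn : polyAct (expand n f) c = 0 :=
      ih (right_ne_zero_of_mul hn0) fun q hq hqn => hn q hq (hqn.mul_left p)
    funext x
    have hdvd := prime_dvd_polyAct_expand hp hfn x
    rw [← expand_mul] at hdvd
    exact Int.eq_zero_of_abs_lt_dvd hdvd
      ((abs_polyAct_expand_le hB _ f x).trans_lt (hn p hp (dvd_mul_right p n)))

lemma exists_forall_polyAct_expand_eq_zero {c : G → ℤ} (hc : (Set.range c).Finite) {f : ℤ[G]}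
    (hf : polyAct f c = 0) : ∃ r ≠ 0, ∀ i, polyAct (expand (1 + i * r) f) c = 0 := by
  obtain ⟨B, hB⟩ := (hc.image abs).bddAbove
  rw [mem_upperBounds, Set.forall_mem_image, Set.forall_mem_range] at hB
  set K := ((f.coeff.sum fun _ a => |a|) * B).toNat
  refine ⟨K.factorial, K.factorial_ne_zero, fun i => ?_⟩
  refine polyAct_expand_eq_zero hB hf (by omega) fun p hp hpn => ?_
  by_contra! hle
  have hpr : p ∣ K.factorial := hp.dvd_factorial.2 (by simpa using Int.toNat_le_toNat hle)
  exact hp.not_dvd_one ((Nat.dvd_add_left (hpr.mul_left i)).1 hpn)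

theorem exists_polyAct_prod_monomialSubOne_eq_zero [DecidableEq G] {c : G → ℤ}
    (hc : (Set.range c).Finite) {f : ℤ[G]} (hf : polyAct f c = 0) {v₀ : G}
    (hv₀ : v₀ ∈ f.coeff.support) :
    ∃ r ≠ 0, polyAct (∏ v ∈ f.coeff.support.erase v₀, monomialSubOne ℤ (r • (v₀ - v))) c = 0 := by
  obtain ⟨r, hr, hann⟩ := exists_forall_polyAct_expand_eq_zero hc hf
  refine ⟨r, hr, polyAct_eq_zero_of_single_mul (v := v₀) (Finsupp.mem_support_iff.1 hv₀) ?_⟩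
  -- `P` vanishes at `X^(r • v)` for every other `v` in the support of `f`, so combining the
  -- annihilators `expand (1 + i * r) f` with the coefficients of `P` retains only the `v₀` term.
  let P : Polynomial ℤ[G] :=
    ∏ v ∈ f.coeff.support.erase v₀, (.C (.single (-(r • v)) 1) * .X - 1)
  have eval_P (u : G) : P.eval (.single (r • u) 1) =
      ∏ v ∈ f.coeff.support.erase v₀, monomialSubOne ℤ (r • (u - v)) := by
    simp [P, Polynomial.eval_prod, monomialSubOne, AddMonoidAlgebra.single_mul_single, smul_sub,
      neg_add_eq_sub]
  have isolate : (P.sum fun i b => b * expand (1 + i * r) f) = .single v₀ (f.coeff v₀) *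
      ∏ v ∈ f.coeff.support.erase v₀, monomialSubOne ℤ (r • (v₀ - v)) := by
    rw [sum_mul_expand_one_add_mul, Finsupp.sum, Finset.sum_eq_single_of_mem v₀ hv₀, eval_P]
    intro u hu hne
    rw [eval_P, Finset.prod_eq_zero (Finset.mem_erase.2 ⟨hne, hu⟩), mul_zero]
    simp [monomialSubOne, AddMonoidAlgebra.one_def]
  rw [← isolate, Polynomial.sum, map_sum, LinearMap.sum_apply]
  exact Finset.sum_eq_zero fun i _ => polyAct_eq_zero_of_dvd (dvd_mul_left _ _) (hann i)

end Expand

section Directions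

lemma exists_smul_eq_smul_of_not_linearIndependent {R M : Type*} [CommRing R] [NoZeroDivisors R]
    [AddCommGroup M] [Module R M] [Module.IsTorsionFree R M] {v w : M} (hv : v ≠ 0)
    (h : ¬ LinearIndependent R ![v, w]) : ∃ a b : R, b ≠ 0 ∧ a • v = b • w := by
  simp only [LinearIndependent.pair_iff, not_forall] at h
  obtain ⟨a, b, hab, hne⟩ := h
  refine ⟨a, -b, fun hb => hne ?_, by rw [neg_smul]; exact eq_neg_of_add_eq_zero_left hab⟩
  have hb0 : b = 0 := neg_eq_zero.1 hb
  rw [hb0, zero_smul, add_zero] at hab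
  exact ⟨(smul_eq_zero.1 hab).resolve_right hv, hb0⟩

lemma linearIndependent_pair_smul_left {R M : Type*} [CommRing R] [NoZeroDivisors R]
    [AddCommGroup M] [Module R M] {v w : M} (h : LinearIndependent R ![v, w]) {a : R}
    (ha : a ≠ 0) : LinearIndependent R ![a • v, w] := by
  rw [LinearIndependent.pair_iff] at h ⊢
  intro s t hst
  obtain ⟨hsa, ht⟩ := h (s * a) t (by rwa [mul_smul])
  exact ⟨(mul_eq_zero.1 hsa).resolve_right ha, ht⟩

variable {R G : Type*} [CommRing R] [AddCommGroup G]

lemma polyAct_monomialSubOne_eq_zero_of_sq [IsAddTorsionFree R] {c : G → R}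
    (hc : (Set.range c).Finite) {v : G}
    (h : polyAct (monomialSubOne R v ^ 2) c = 0) : polyAct (monomialSubOne R v) c = 0 := by
  rw [sq, polyAct_mul_apply, polyAct_monomialSubOne_eq_zero_iff] at h
  set g := polyAct (monomialSubOne R v) c with hg
  -- `c` is affine along `v`, so a nonzero slope `g x` would give it infinitely many values.
  have sub_eq (x : G) : c (x - v) = c x + g x := by
    rw [hg, polyAct_monomialSubOne_apply]
    ring
  have affine (n : ℕ) (x : G) : c (x - n • v) = c x + n • g x := by
    induction n with
    | zero => simp
    | succ n ih => rw [succ_nsmul, ← sub_sub, sub_eq, ih, h.sub_nsmul_eq, succ_nsmul, add_assoc]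
  funext x
  by_contra hx
  have inj : Function.Injective fun n : ℕ => c (x - n • v) := by
    simp only [affine]
    exact (add_right_injective _).comp <|
      injective_nsmul_iff_not_isOfFinAddOrder.2 (not_isOfFinAddOrder_of_isAddTorsionFree hx)
  exact Set.infinite_range_of_injective inj
    (hc.subset (Set.range_comp_subset_range (fun n : ℕ => x - n • v) c))

lemma polyAct_monomialSubOne_mul_eq_zero_of_smul_eq_smul [IsAddTorsionFree R] {c : G → R}
    (hc : (Set.range c).Finite) {v w : G} {a b : ℤ} (hab : a • v = b • w) {f : R[G]}
    (h : polyAct (monomialSubOne R v * (monomialSubOne R w * f)) c = 0) :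
    polyAct (monomialSubOne R (b • w) * f) c = 0 := by
  rw [polyAct_mul_apply]
  refine polyAct_monomialSubOne_eq_zero_of_sq (finite_range_polyAct hc f) ?_
  rw [← polyAct_mul_apply]
  refine polyAct_eq_zero_of_dvd ?_ h
  rw [← mul_assoc, sq]
  exact mul_dvd_mul_right (mul_dvd_mul (hab ▸ monomialSubOne_dvd_zsmul v a)
    (monomialSubOne_dvd_zsmul w b)) f

/-- A finite set of nonzero, pairwise non-parallel directions, non-parallel meaning linearly
independent over `ℤ`. Difference polynomials in such directions can be split off one by one. -/
structure IsDirectionSet (s : Finset G) : Prop where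
  ne_zero : ∀ v ∈ s, v ≠ 0
  pairwise : (s : Set G).Pairwise fun v w => LinearIndependent ℤ ![v, w]

lemma notMem_of_forall_linearIndependent {s : Finset G} {v : G}
    (h : ∀ w ∈ s, LinearIndependent ℤ ![v, w]) : v ∉ s :=
  fun hv => absurd ((h v hv).injective (a₁ := 0) (a₂ := 1) rfl) zero_ne_one

namespace IsDirectionSet

variable {s : Finset G} {v : G}

lemma mono {t : Finset G} (ht : IsDirectionSet t) (hst : s ⊆ t) : IsDirectionSet s :=
  ⟨fun v hv => ht.ne_zero v (hst hv), ht.pairwise.mono (Finset.coe_subset.2 hst)⟩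

variable [DecidableEq G]

lemma insert_of_linearIndependent (hs : IsDirectionSet s) (hv : v ≠ 0)
    (h : ∀ w ∈ s, LinearIndependent ℤ ![v, w]) : IsDirectionSet (insert v s) := by
  refine ⟨by simpa [hv] using hs.ne_zero, ?_⟩
  rw [Finset.coe_insert, Set.pairwise_insert]
  exact ⟨hs.pairwise, fun w hw _ => ⟨h w hw, LinearIndependent.pair_symm_iff.1 (h w hw)⟩⟩

lemma linearIndependent (h : IsDirectionSet (insert v s)) (hv : v ∉ s) :
    ∀ w ∈ s, LinearIndependent ℤ ![v, w] := fun w hw =>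
  h.pairwise (by simp) (by simp [hw]) (by rintro rfl; exact hv hw)

end IsDirectionSet

lemma IsDirectionSet.exists_polyAct_mul_prod_eq_zero [IsAddTorsionFree R] [IsAddTorsionFree G]
    {s : Finset G} (hs : IsDirectionSet s) {v : G} (hv : v ≠ 0) {c : G → R}
    (hc : (Set.range c).Finite)
    (h : polyAct (monomialSubOne R v * ∏ w ∈ s, monomialSubOne R w) c = 0) :
    ∃ t : Finset G, IsDirectionSet t ∧ polyAct (∏ w ∈ t, monomialSubOne R w) c = 0 := by
  classical
  by_cases hpar : ∀ u ∈ s, LinearIndependent ℤ ![v, u]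
  · refine ⟨insert v s, hs.insert_of_linearIndependent hv hpar, ?_⟩
    rwa [Finset.prod_insert (notMem_of_forall_linearIndependent hpar)]
  push Not at hpar
  obtain ⟨u, hu, hvu⟩ := hpar
  have hu0 := hs.ne_zero u hu
  obtain ⟨a, b, hb, hab⟩ := exists_smul_eq_smul_of_not_linearIndependent hv hvu
  have hind : ∀ w ∈ s.erase u, LinearIndependent ℤ ![b • u, w] := fun w hw =>
    linearIndependent_pair_smul_left
      (hs.pairwise hu (Finset.mem_of_mem_erase hw) (Finset.ne_of_mem_erase hw).symm) hb
  refine ⟨insert (b • u) (s.erase u),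
    (hs.mono (s.erase_subset u)).insert_of_linearIndependent (smul_ne_zero hb hu0) hind, ?_⟩
  rw [Finset.prod_insert (notMem_of_forall_linearIndependent hind)]
  rw [← Finset.mul_prod_erase s _ hu] at h
  exact polyAct_monomialSubOne_mul_eq_zero_of_smul_eq_smul hc hab h

theorem exists_isDirectionSet_polyAct_eq_zero [IsAddTorsionFree R] [IsAddTorsionFree G]
    {ι : Type*} (s : Finset ι) {v : ι → G} (hv : ∀ i ∈ s, v i ≠ 0) {c : G → R}
    (hc : (Set.range c).Finite) (h : polyAct (∏ i ∈ s, monomialSubOne R (v i)) c = 0) :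
    ∃ t : Finset G, IsDirectionSet t ∧ polyAct (∏ w ∈ t, monomialSubOne R w) c = 0 := by
  classical
  induction s using Finset.induction_on generalizing c with
  | empty => exact ⟨∅, ⟨by simp, by simp⟩, by simpa using h⟩
  | insert i s hi ih =>
    rw [Finset.prod_insert hi, mul_comm, polyAct_mul_apply] at h
    obtain ⟨t, ht, htc⟩ := ih (fun j hj => hv j (Finset.mem_insert_of_mem hj))
      (finite_range_polyAct hc _) h
    rw [← polyAct_mul_apply, mul_comm] at htc
    exact ht.exists_polyAct_mul_prod_eq_zero (hv i (Finset.mem_insert_self i s)) hc htc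

end Directions

section Limit

variable {G α : Type*} [AddCommGroup G] {v : G} {c c' g g' : G → α}

/-- The translates of `c` by `n • v` converge pointwise to `g` as `n → ∞`, for the discrete
topology on the values. -/
def HasLimitAlong (v : G) (c g : G → α) : Prop :=
  ∀ x, ∀ᶠ n : ℕ in atTop, c (x + n • v) = g x

namespace HasLimitAlong

lemma of_periodic (h : Function.Periodic c v) : HasLimitAlong v c c := fun x =>
  Eventually.of_forall fun n => h.nsmul n x

lemma unique (h : HasLimitAlong v c g) (h' : HasLimitAlong v c g') : g = g' := by
  funext x
  obtain ⟨n, hn, hn'⟩ := ((h x).and (h' x)).exists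
  exact hn.symm.trans hn'

lemma periodic (h : HasLimitAlong v c g) : Function.Periodic g v := fun x => by
  obtain ⟨n, hn, hn'⟩ := ((h (x + v)).and ((tendsto_add_atTop_nat 1).eventually (h x))).exists
  rw [← hn, ← hn', succ_nsmul', add_assoc]

lemma add [Add α] (h : HasLimitAlong v c g) (h' : HasLimitAlong v c' g') :
    HasLimitAlong v (c + c') (g + g') := fun x => by
  filter_upwards [h x, h' x] with n hn hn'
  simp [hn, hn']

lemma const_smul {R : Type*} [SMul R α] (h : HasLimitAlong v c g) (a : R) :
    HasLimitAlong v (a • c) (a • g) := fun x => by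
  filter_upwards [h x] with n hn
  simp [hn]

end HasLimitAlong

end Limit

section LimitPolyAct

variable {R G : Type*} [AddCommGroup G] {v : G} {c g : G → R}

lemma HasLimitAlong.polyAct [CommSemiring R] (h : HasLimitAlong v c g) (f : R[G]) :
    HasLimitAlong v (polyAct f c) (polyAct f g) := by
  induction f using AddMonoidAlgebra.induction_linear with
  | zero => simpa using HasLimitAlong.of_periodic fun _ => rfl
  | add f₁ f₂ h₁ h₂ => simpa using h₁.add h₂
  | single u a =>
    intro x
    filter_upwards [h (x - u)] with n hn
    rw [polyAct_single_apply, polyAct_single_apply, add_sub_right_comm, hn]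

lemma exists_hasLimitAlong [CommRing R]
    (h : HasLimitAlong v (polyAct (monomialSubOne R v) c) 0) :
    ∃ g, HasLimitAlong v c g := by
  suffices ∀ x, ∃ y, ∀ᶠ n : ℕ in atTop, c (x + n • v) = y from Classical.skolem.1 this
  intro x
  have hstep : ∀ᶠ n : ℕ in atTop, c (x + (n + 1) • v) = c (x + n • v) := by
    filter_upwards [(tendsto_add_atTop_nat 1).eventually (h x)] with n hn
    rw [polyAct_monomialSubOne_apply, succ_nsmul, ← add_assoc, add_sub_cancel_right] at hn
    rw [succ_nsmul, ← add_assoc]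
    exact (sub_eq_zero.1 hn).symm
  exact eventuallyConst_iff_exists_eventuallyEq.1
    (eventuallyConst_atTop_nat.2 (eventually_atTop.1 hstep))

end LimitPolyAct

section Cosets

variable {R G : Type*} [Semiring R] [AddCommGroup G] {v : G} {c g : G → R}

open scoped Classical in
variable (R) in
/-- The indicator function of a coset of `ℤv`: the basic example of a `v`-periodic `v`-fiber. -/
noncomputable def cosetIndicator (v : G) (q : G ⧸ AddSubgroup.zmultiples v) : G → R :=
  fun x => if (x : G ⧸ AddSubgroup.zmultiples v) = q then 1 else 0

lemma mk_eq_of_cosetIndicator_ne_zero {q : G ⧸ AddSubgroup.zmultiples v} {x : G}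
    (h : cosetIndicator R v q x ≠ 0) : (x : G ⧸ AddSubgroup.zmultiples v) = q :=
  (ite_ne_right_iff.1 h).1

lemma periodic_cosetIndicator (q : G ⧸ AddSubgroup.zmultiples v) :
    Function.Periodic (cosetIndicator R v q) v := fun x => by
  simp only [cosetIndicator, QuotientAddGroup.mk_add_of_mem x (AddSubgroup.mem_zmultiples v)]

variable (R) in
/-- The span of the coset indicators in the directions `s`: the finite sums of functions each of
which is `v`-periodic and supported on a single coset of `ℤv` for some `v ∈ s`. -/
def fiberSpan (s : Finset G) : Submodule R (G → R) :=
  Submodule.span R {g | ∃ v ∈ s, ∃ q, cosetIndicator R v q = g}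

lemma fiberSpan_mono {s t : Finset G} (h : s ⊆ t) : fiberSpan R s ≤ fiberSpan R t :=
  Submodule.span_mono fun _ ⟨v, hv, hg⟩ => ⟨v, h hv, hg⟩

lemma cosetIndicator_mem_fiberSpan {s : Finset G} (hv : v ∈ s)
    (q : G ⧸ AddSubgroup.zmultiples v) : cosetIndicator R v q ∈ fiberSpan R s :=
  Submodule.subset_span ⟨v, hv, q, rfl⟩

lemma mem_fiberSpan_of_periodic {s : Finset G} (hv : v ∈ s) (hper : Function.Periodic g v)
    (hfin : (Function.support hper.lift).Finite) : g ∈ fiberSpan R s := by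
  have hsum : g = ∑ q ∈ hfin.toFinset, hper.lift q • cosetIndicator R v q := by
    classical
    funext x
    simp only [Finset.sum_apply, Pi.smul_apply, cosetIndicator, smul_eq_mul, mul_ite,
      mul_one, mul_zero, Finset.sum_ite_eq, Set.Finite.mem_toFinset, Function.mem_support,
      hper.lift_coe, ite_not]
    split_ifs with h
    · exact h
    · rfl
  rw [hsum]
  exact Submodule.sum_mem _ fun q _ =>
    Submodule.smul_mem _ _ (cosetIndicator_mem_fiberSpan hv q)

lemma injective_mk_add_nsmul {u : G} (h : LinearIndependent ℤ ![v, u]) (x : G) :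
    Function.Injective fun n : ℕ => ((x + n • v : G) : G ⧸ AddSubgroup.zmultiples u) := by
  intro m n hmn
  obtain ⟨k, hk⟩ := AddSubgroup.mem_zmultiples_iff.1 (QuotientAddGroup.eq.1 hmn)
  have hrel : ((n : ℤ) - m) • v + (-k) • u = 0 := by
    simp only [sub_smul, neg_smul, hk, natCast_zsmul]
    abel
  have := (LinearIndependent.pair_iff.1 h _ _ hrel).1
  omega

lemma hasLimitAlong_cosetIndicator {u : G} (h : LinearIndependent ℤ ![v, u])
    (q : G ⧸ AddSubgroup.zmultiples u) : HasLimitAlong v (cosetIndicator R u q) 0 := fun x => by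
  have htends := (injective_mk_add_nsmul h x).tendsto_cofinite
  rw [Nat.cofinite_eq_atTop] at htends
  filter_upwards [htends.eventually (eventually_cofinite_ne q)] with n hn
  by_contra hne
  exact hn (mk_eq_of_cosetIndicator_ne_zero hne)

lemma hasLimitAlong_zero_of_mem_fiberSpan {s : Finset G} (hc : c ∈ fiberSpan R s)
    (h : ∀ u ∈ s, LinearIndependent ℤ ![v, u]) : HasLimitAlong v c 0 := by
  induction hc using Submodule.span_induction with
  | mem g hg =>
    obtain ⟨u, hu, q, rfl⟩ := hg
    exact hasLimitAlong_cosetIndicator (h u hu) q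
  | zero => exact .of_periodic fun _ => rfl
  | add g g' _ _ hg hg' => simpa using hg.add hg'
  | smul a g _ hg => simpa using hg.const_smul a

lemma injective_out_add_nsmul [IsAddTorsionFree G] (hv : v ≠ 0) :
    Function.Injective fun p : (G ⧸ AddSubgroup.zmultiples v) × ℕ => p.1.out + p.2 • v := by
  have hmk (p : (G ⧸ AddSubgroup.zmultiples v) × ℕ) :
      ((p.1.out + p.2 • v : G) : G ⧸ AddSubgroup.zmultiples v) = p.1 := by
    rw [QuotientAddGroup.mk_add_of_mem _ (nsmul_mem (AddSubgroup.mem_zmultiples v) _)]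
    exact Quotient.out_eq _
  intro p p' h
  have hq : p.1 = p'.1 := by rw [← hmk p, ← hmk p']; exact congrArg _ h
  refine Prod.ext hq ?_
  simp only [hq, add_right_inj] at h
  exact injective_nsmul_iff_not_isOfFinAddOrder.2 (not_isOfFinAddOrder_of_isAddTorsionFree hv) h

end Cosets

section Sparse

variable {d : ℕ} {c g : (Fin d → ℤ) → ℤ} {v : Fin d → ℤ}

lemma mem_cube_iff_norm_sub_le {m : ℕ} {t u : Fin d → ℤ} : u ∈ cube m t ↔ ‖u - t‖ ≤ m := by
  simp only [cube, Set.mem_ofPred_eq, pi_norm_le_iff_of_nonneg (Nat.cast_nonneg m), Pi.sub_apply,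
    Int.norm_eq_abs]
  exact_mod_cast Iff.rfl

lemma finite_cube (m : ℕ) (t : Fin d → ℤ) : (cube m t).Finite := by
  refine (isCompact_closedBall t (m : ℝ)).finite_of_discrete.subset fun u hu => ?_
  rwa [mem_closedBall_iff_norm, ← mem_cube_iff_norm_sub_le]

lemma ncard_support_inter_cube_le {m : ℕ} {t w : Fin d → ℤ}
    (h : ∀ x ∈ cube m t, g x ≠ 0 → c (x + w) ≠ 0) :
    (Function.support g ∩ cube m t).ncard ≤ (Function.support c ∩ cube m (t + w)).ncard :=
  Set.ncard_le_ncard_of_injOn (· + w)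
    (fun x hx => ⟨h x hx.2 hx.1, by simpa [cube] using hx.2⟩) (add_left_injective w).injOn
    ((finite_cube _ _).inter_of_right _)

lemma Sparse.of_hasLimitAlong (hc : Sparse c) (h : HasLimitAlong v c g) : Sparse g := by
  obtain ⟨a, ha, hbound⟩ := hc
  refine ⟨a, ha, fun m hm t => ?_⟩
  obtain ⟨n, hn⟩ := ((finite_cube m t).eventually_all.2 fun x _ => h x).exists
  exact (ncard_support_inter_cube_le fun x hx hgx => (hn x hx).trans_ne hgx).trans (hbound m hm _)

variable (d) in
/-- The sparse functions on `ℤ^d`, as a submodule so that sums and differences come for free. -/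
def sparseSubmodule : Submodule ℤ ((Fin d → ℤ) → ℤ) where
  carrier := {c | Sparse c}
  zero_mem' := ⟨1, one_pos, by simp⟩
  add_mem' := by
    rintro c c' ⟨a, ha, h⟩ ⟨a', ha', h'⟩
    refine ⟨a + a', add_pos ha ha', fun m hm t => ?_⟩
    calc (Function.support (c + c') ∩ cube m t).ncard
        ≤ (Function.support c ∩ cube m t ∪ Function.support c' ∩ cube m t).ncard := by
          rw [← Set.union_inter_distrib_right]
          exact Set.ncard_le_ncard (Set.inter_subset_inter_left _ (Function.support_add _ _))
            ((finite_cube m t).inter_of_right _)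
      _ ≤ _ := Set.ncard_union_le _ _
      _ ≤ a * m + a' * m := add_le_add (h m hm t) (h' m hm t)
      _ = (a + a') * m := (add_mul a a' m).symm
  smul_mem' := by
    rintro k c ⟨a, ha, h⟩
    refine ⟨a, ha, fun m hm t => ?_⟩
    refine (ncard_support_inter_cube_le (w := 0) fun x _ hx => ?_).trans (h m hm _)
    rw [add_zero]
    exact right_ne_zero_of_mul hx

lemma Sparse.polyAct (hc : Sparse c) (f : ℤ[Fin d → ℤ]) : Sparse (polyAct f c) := by
  induction f using AddMonoidAlgebra.induction_linear with
  | zero =>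
    rw [map_zero, LinearMap.zero_apply]
    exact (sparseSubmodule d).zero_mem
  | add f₁ f₂ h₁ h₂ =>
    rw [map_add, LinearMap.add_apply]
    exact (sparseSubmodule d).add_mem h₁ h₂
  | single u b =>
    obtain ⟨a, ha, h⟩ := hc
    refine ⟨a, ha, fun m hm t => ?_⟩
    refine (ncard_support_inter_cube_le (w := -u) fun x _ hx => ?_).trans (h m hm _)
    rw [polyAct_single_apply, sub_eq_add_neg] at hx
    exact right_ne_zero_of_mul hx

lemma card_mul_le_ncard_support_inter_cube (hper : Function.Periodic c v) (hv : v ≠ 0)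
    {T : Finset ((Fin d → ℤ) ⧸ AddSubgroup.zmultiples v)} (hT : ↑T ⊆ Function.support hper.lift)
    {W X : ℕ} (hW : ‖v‖ ≤ W) (hX : ∀ q ∈ T, ‖q.out‖ ≤ X) (M : ℕ) :
    T.card * M ≤ (Function.support c ∩ cube (X + M * W) 0).ncard := by
  rw [← Finset.card_range M, ← Finset.card_product, Finset.card_range, ← Set.ncard_coe_finset]
  refine Set.ncard_le_ncard_of_injOn _ ?_ (injective_out_add_nsmul hv).injOn
    ((finite_cube _ _).inter_of_right _)
  rintro ⟨q, n⟩ hqn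
  obtain ⟨hq, hn⟩ := Finset.mem_product.1 hqn
  refine ⟨?_, mem_cube_iff_norm_sub_le.2 ?_⟩
  · have hlift : hper.lift q = c q.out := by
      conv_lhs => rw [← Quotient.out_eq q]
      exact hper.lift_coe _
    rw [Function.mem_support, hper.nsmul n, ← hlift]
    exact hT hq
  · rw [sub_zero]
    push_cast
    have hnM : (n : ℝ) ≤ M := mod_cast (Finset.mem_range.1 hn).le
    calc ‖q.out + n • v‖ ≤ ‖q.out‖ + n * ‖v‖ := norm_add_le_of_le le_rfl norm_nsmul_le
      _ ≤ X + M * W := by gcongr; exact hX q hq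

lemma Sparse.finite_support_lift (hc : Sparse c) (hper : Function.Periodic c v) (hv : v ≠ 0) :
    (Function.support hper.lift).Finite := by
  by_contra hinf
  obtain ⟨a, -, hbound⟩ := hc
  obtain ⟨W, hW⟩ := exists_nat_ge ‖v‖
  obtain ⟨T, hT, hcard⟩ := Set.Infinite.exists_subset_card_eq hinf (a * W + 1)
  -- `a * W + 1` cosets of `ℤv` put at least `(a * W + 1) * M` points into a cube of radius
  -- `X + M * W`, which exceeds the bound `a * (X + M * W)` as soon as `M > a * X`.
  let X := T.sup fun q => ⌈‖q.out‖⌉₊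
  have hX : ∀ q ∈ T, ‖q.out‖ ≤ X := fun q hq =>
    (Nat.le_ceil _).trans (mod_cast Finset.le_sup (f := fun q => ⌈‖q.out‖⌉₊) hq)
  have hWpos : 0 < W := mod_cast (norm_pos_iff.2 hv).trans_le hW
  have hlarge := (card_mul_le_ncard_support_inter_cube hper hv hT hW hX (a * X + 1)).trans
    (hbound _ (by positivity) 0)
  rw [hcard] at hlarge
  linarith

theorem mem_fiberSpan_of_sparse {s : Finset (Fin d → ℤ)} (hs : IsDirectionSet s) (hc : Sparse c)
    (h : polyAct (∏ v ∈ s, monomialSubOne ℤ v) c = 0) : c ∈ fiberSpan ℤ s := by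
  induction s using Finset.induction_on generalizing c with
  | empty =>
    rw [Finset.prod_empty, map_one, Module.End.one_apply] at h
    exact h ▸ Submodule.zero_mem _
  | insert v s hvs ih =>
    have hsub := Finset.subset_insert v s
    have hv := hs.ne_zero v (Finset.mem_insert_self v s)
    rw [Finset.prod_insert hvs] at h
    have hdiff : polyAct (monomialSubOne ℤ v) c ∈ fiberSpan ℤ s :=
      ih (hs.mono hsub) (hc.polyAct _) (by rwa [← polyAct_mul_apply, mul_comm])
    obtain ⟨g, hg⟩ := exists_hasLimitAlong
      (hasLimitAlong_zero_of_mem_fiberSpan hdiff (hs.linearIndependent hvs))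
    have hgs : Sparse g := hc.of_hasLimitAlong hg
    have hgmem : g ∈ fiberSpan ℤ (insert v s) :=
      mem_fiberSpan_of_periodic (Finset.mem_insert_self v s) hg.periodic
        (hgs.finite_support_lift hg.periodic hv)
    have hsame : polyAct (∏ w ∈ s, monomialSubOne ℤ w) c =
        polyAct (∏ w ∈ s, monomialSubOne ℤ w) g := by
      rw [polyAct_mul_apply, polyAct_monomialSubOne_eq_zero_iff] at h
      exact (HasLimitAlong.of_periodic h).unique (hg.polyAct _)
    have hrest : c - g ∈ fiberSpan ℤ s :=
      ih (hs.mono hsub) ((sparseSubmodule d).sub_mem hc hgs)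
        (by rw [map_sub, hsame, sub_self])
    rw [← sub_add_cancel c g]
    exact add_mem (fiberSpan_mono hsub hrest) hgmem

end Sparse

section Fibers

variable {d : ℕ}

lemma polyAct_ofCoeff_eq_polyApply {f : (Fin d → ℤ) → ℤ} (hf : IsPoly f) (c : (Fin d → ℤ) → ℤ) :
    polyAct (.ofCoeff (Finsupp.ofSupportFinite f hf)) c = polyApply f c := by
  funext u
  rw [polyAct_apply, polyApply]
  refine (finsum_eq_sum_of_support_subset _ fun v hv => ?_).symm
  exact Finsupp.mem_support_iff.2 (left_ne_zero_of_mul hv)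

lemma isFiber_cosetIndicator (v : Fin d → ℤ) (q : (Fin d → ℤ) ⧸ AddSubgroup.zmultiples v) :
    IsFiber (cosetIndicator ℤ v q) v := by
  refine ⟨q.out, fun x hx => ?_⟩
  have hcoset := (Quotient.out_eq q).trans (mk_eq_of_cosetIndicator_ne_zero hx).symm
  obtain ⟨k, hk⟩ := AddSubgroup.mem_zmultiples_iff.1 (QuotientAddGroup.eq.1 hcoset)
  refine ⟨k, funext fun i => ?_⟩
  have hki : k * v i = -q.out i + x i := congrFun hk i
  simp only [intVecQ, Pi.add_apply, Pi.smul_apply, smul_eq_mul]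
  exact_mod_cast (by linarith : x i = q.out i + k * v i)

lemma IsFiber.smul {e : (Fin d → ℤ) → ℤ} {v : Fin d → ℤ} (he : IsFiber e v) (k : ℤ) :
    IsFiber (k • e) v :=
  he.imp fun _ hw x hx => hw x (right_ne_zero_of_mul hx)

lemma exists_eq_sum_of_mem_fiberSpan {s : Finset (Fin d → ℤ)} {c : (Fin d → ℤ) → ℤ}
    (hc : c ∈ fiberSpan ℤ s) :
    ∃ (r : ℕ) (e : Fin r → (Fin d → ℤ) → ℤ) (v : Fin r → Fin d → ℤ), c = ∑ j, e j ∧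
      ∀ j, v j ∈ s ∧ IsFiber (e j) (v j) ∧ Function.Periodic (e j) (v j) := by
  obtain ⟨r, k, g, hsum⟩ := Submodule.mem_span_set'.1 hc
  choose v hv q hq using fun j => (g j).2
  refine ⟨r, fun j => k j • g j, v, hsum.symm, fun j => ⟨hv j, ?_⟩⟩
  simp only [← hq j]
  exact ⟨(isFiber_cosetIndicator _ _).smul _, (periodic_cosetIndicator _).smul _⟩

end Fibers

/-- A sparse configuration with a non-trivial annihilator is a finite sum of
periodic fibers. -/
theorem sparse_with_annihilator_is_sum_of_periodic_fibers
    {d : ℕ} (c : (Fin d → ℤ) → ℤ) (hconf : (Set.range c).Finite) (hsparse : Sparse c)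
    (f : (Fin d → ℤ) → ℤ) (hf : IsPoly f) (hf0 : f ≠ 0) (hann : polyApply f c = 0) :
    ∃ (r : ℕ) (e : Fin r → ((Fin d → ℤ) → ℤ)) (v : Fin r → (Fin d → ℤ)),
      c = ∑ j, e j ∧
      ∀ j, v j ≠ 0 ∧ IsFiber (e j) (v j) ∧ ∃ w : Fin d → ℤ, w ≠ 0 ∧ Periodic (e j) w := by
  obtain ⟨v₀, hv₀⟩ := Function.ne_iff.1 hf0
  rw [← polyAct_ofCoeff_eq_polyApply hf] at hann
  obtain ⟨r, hr, hprod⟩ :=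
    exists_polyAct_prod_monomialSubOne_eq_zero hconf hann (Finsupp.mem_support_iff.2 hv₀)
  obtain ⟨s, hs, hsann⟩ := exists_isDirectionSet_polyAct_eq_zero _
    (fun v hv => smul_ne_zero hr (sub_ne_zero.2 (Finset.ne_of_mem_erase hv).symm)) hconf hprod
  obtain ⟨n, e, v, hsum, hfiber⟩ :=
    exists_eq_sum_of_mem_fiberSpan (mem_fiberSpan_of_sparse hs hsparse hsann)
  refine ⟨n, e, v, hsum, fun j => ?_⟩
  obtain ⟨hvs, hjfiber, hjper⟩ := hfiber j
  have hvj := hs.ne_zero _ hvs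
  exact ⟨hvj, hjfiber, v j, hvj, hjper⟩

end PaperFormal
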